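/- Let σ be a permutation on {1,…,k} and H an arbitrary n×n matrix. (1) For any (k+1)-tensor T on ℝ^n: Diag^σ(T[diag H]) = (Diag^{σ_{(k+1)}} T)[H]. (2) For any k-tensor T on ℝ^n and every l = 1,…,k: Diag^σ(T^{τ_l}[diag H]) = (Diag^{σ_{(l)}} T^{τ_l})[H]. Here diag H = (H^{11},…,H^{nn}) ∈ ℝ^n, and for a 2(k+1)-tensor S viewed as a (k+1)-tensor on matrices, S[H] denotes fixing the last matrix argument to H; both sides are 2k-tensors. -/

import Mathlib

open scoped BigOperators
open Filter Asymptotics Matrix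

attribute [local instance] Matrix.normedAddCommGroup

noncomputable section

/-- A `k`-tensor on `ℝ^n`, identified with its array of entries. -/
abbrev Tensor (k n : ℕ) : Type := (Fin k → Fin n) → ℝ

/-- A `2k`-tensor on `ℝ^n`, with its indices grouped into two groups of `k`. -/
abbrev Tensor2 (k n : ℕ) : Type := (Fin k → Fin n) → (Fin k → Fin n) → ℝ

/-- The `σ`-Hadamard product of `k` matrices:
`(H₁ ∘_σ ⋯ ∘_σ H_k)^{i₁…i_k} = ∏ s, H_s^{i_s i_{σ⁻¹(s)}}`. -/
def hadamardProd {k n : ℕ} (σ : Equiv.Perm (Fin k))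
    (H : Fin k → Matrix (Fin n) (Fin n) ℝ) : Tensor k n :=
  fun i => ∏ s, H s (i s) (i (σ⁻¹ s))

/-- The dot product of two `k`-tensors. -/
def tdot {k n : ℕ} (T₁ T₂ : Tensor k n) : ℝ :=
  ∑ p : Fin k → Fin n, T₁ p * T₂ p

/-- `Diag^σ T`, the `2k`-tensor equal to `T^{i₁…i_k}` when `i_s = j_{σ(s)}` for all `s`,
and `0` otherwise. -/
def diagPerm {k n : ℕ} (σ : Equiv.Perm (Fin k)) (T : Tensor k n) : Tensor2 k n :=
  fun i j => if ∀ s, i s = j (σ s) then T i else 0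

/-- A `2k`-tensor viewed as a `k`-tensor on matrix arguments:
`S[H₁,…,H_k] = ∑_{p,q} S^{p₁…p_k}_{q₁…q_k} ∏ s, H_s^{p_s q_s}`. -/
def apply2 {k n : ℕ} (S : Tensor2 k n)
    (H : Fin k → Matrix (Fin n) (Fin n) ℝ) : ℝ :=
  ∑ p : Fin k → Fin n, ∑ q : Fin k → Fin n, S p q * ∏ s, H s (p s) (q s)

/-- Conjugation `U S Uᵀ` of a `2k`-tensor `S` by a matrix `U`. -/
def conj2 {k n : ℕ} (U : Matrix (Fin n) (Fin n) ℝ) (S : Tensor2 k n) : Tensor2 k n :=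
  fun i j => ∑ p : Fin k → Fin n, ∑ q : Fin k → Fin n,
    S p q * ((∏ s, U (i s) (p s)) * ∏ s, U (j s) (q s))

/-- For a `2(k+1)`-tensor `S` viewed as a `(k+1)`-tensor on matrices, `S[H]` fixes the last
matrix argument to `H`, producing a `2k`-tensor. -/
def lastApply {k n : ℕ} (S : Tensor2 (k+1) n)
    (H : Matrix (Fin n) (Fin n) ℝ) : Tensor2 k n :=
  fun i j => ∑ a : Fin n, ∑ b : Fin n, S (Fin.snoc i a) (Fin.snoc j b) * H a b

/-- `T[x]`: contraction of the last index of a `(k+1)`-tensor against a vector. -/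
def contract {k n : ℕ} (T : Tensor (k+1) n) (x : Fin n → ℝ) : Tensor k n :=
  fun i => ∑ a : Fin n, T (Fin.snoc i a) * x a

/-- A permutation `σ` of `{1,…,k}` viewed as a permutation of `{1,…,k+1}` fixing `k+1`. -/
def extPerm {k : ℕ} (σ : Equiv.Perm (Fin k)) : Equiv.Perm (Fin (k+1)) :=
  (Equiv.permCongr finSuccEquivLast).symm σ.optionCongr

/-- `σ_{(l)} := σ ∘ τ_l`, where `τ_l` is the transposition `(l, k+1)` (and `σ` fixes `k+1`).
Here `l : Fin (k+1)`; taking `l = Fin.last k` gives `σ_{(k+1)} = σ`. -/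
def permIns {k : ℕ} (σ : Equiv.Perm (Fin k)) (l : Fin (k+1)) : Equiv.Perm (Fin (k+1)) :=
  extPerm σ * Equiv.swap l (Fin.last k)

/-- A tensor is `μ`-block-constant if its entries agree on componentwise `μ`-equivalent
multi-indices (`i ∼ j` iff `μ i = μ j`). -/
def BlockConstant {k n : ℕ} (μ : Fin n → ℝ) (T : Tensor k n) : Prop :=
  ∀ i j : Fin k → Fin n, (∀ s, μ (i s) = μ (j s)) → T i = T j

/-- `H_in`: the diagonal-block part of `H` (w.r.t. the blocks of `μ`). -/
def matIn {n : ℕ} (μ : Fin n → ℝ) (H : Matrix (Fin n) (Fin n) ℝ) :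
    Matrix (Fin n) (Fin n) ℝ :=
  Matrix.of fun i j => if μ i = μ j then H i j else 0

/-- `H_out = H - H_in`: the off-diagonal-block part of `H`. -/
def matOut {n : ℕ} (μ : Fin n → ℝ) (H : Matrix (Fin n) (Fin n) ℝ) :
    Matrix (Fin n) (Fin n) ℝ :=
  H - matIn μ H

/-- The divided-difference tensor `T^{(l)}_out` of a `k`-tensor `T`, a `(k+1)`-tensor. -/
def outDD {k n : ℕ} (μ : Fin n → ℝ) (T : Tensor k n) (l : Fin k) : Tensor (k+1) n :=
  fun i => if μ (i l.castSucc) = μ (i (Fin.last k)) then 0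
    else (T (Function.update (fun s => i s.castSucc) l (i (Fin.last k)))
          - T (fun s => i s.castSucc)) / (μ (i (Fin.last k)) - μ (i l.castSucc))

/-- `T^{τ_l}`: the `(k+1)`-tensor equal to `T^{i₁…i_k}` on the hyperplane `i_l = i_{k+1}`
and `0` elsewhere. -/
def liftTau {k n : ℕ} (T : Tensor k n) (l : Fin k) : Tensor (k+1) n :=
  fun i => if i l.castSucc = i (Fin.last k) then T (fun s => i s.castSucc) else 0

/-- `T^{τ_l}_in`: the "inflated" `(k+1)`-tensor, equal to
`T^{i₁…i_{l-1} i_{k+1} i_{l+1}…i_k}` when `μ_{i_l} = μ_{i_{k+1}}` and `0` otherwise. -/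
def liftTauIn {k n : ℕ} (μ : Fin n → ℝ) (T : Tensor k n) (l : Fin k) : Tensor (k+1) n :=
  fun i => if μ (i l.castSucc) = μ (i (Fin.last k))
    then T (Function.update (fun s => i s.castSucc) l (i (Fin.last k))) else 0

/-- `lam` is the map sending each symmetric matrix to the vector of its eigenvalues
ordered nonincreasingly: it is nonincreasing and realized by an orthogonal
diagonalization. -/
def IsEigCF {n : ℕ} (lam : Matrix (Fin n) (Fin n) ℝ → Fin n → ℝ) : Prop :=
  ∀ A : Matrix (Fin n) (Fin n) ℝ, A.IsSymm →
    Antitone (lam A) ∧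
    ∃ U : Matrix (Fin n) (Fin n) ℝ, Uᵀ * U = 1 ∧
      A = U * Matrix.diagonal (lam A) * Uᵀ

/-- `h` is the concatenated vector `(λ(X₁ᵀ A X₁), …, λ(X_rᵀ A X_r))` of the nonincreasingly
ordered eigenvalues of the diagonal blocks of `A` (blocks determined by `μ`):
equivalently, `h` is nonincreasing within each block of `μ` and `Diag h` is obtained from
`A_in` by conjugating with a block-diagonal orthogonal matrix. -/
def IsBlockEig {n : ℕ} (μ : Fin n → ℝ) (A : Matrix (Fin n) (Fin n) ℝ)
    (h : Fin n → ℝ) : Prop :=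
  (∀ i j : Fin n, i ≤ j → μ i = μ j → h j ≤ h i) ∧
  ∃ V : Matrix (Fin n) (Fin n) ℝ, Vᵀ * V = 1 ∧
    (∀ i j, μ i ≠ μ j → V i j = 0) ∧
    Vᵀ * matIn μ A * V = Matrix.diagonal h

/-!
The entry of `Diag^{σ_{(k+1)}} T` at `(i, a), (j, b)` vanishes unless `a = b`, so contracting its
last pair of indices against `H` sees only the diagonal of `H`. Moreover `T^{τ_l}` is supported on
multi-indices invariant under `τ_l`, and on such a support the condition `i_s = j_{ν(s)}` for all
`s` does not distinguish `ν = σ` from `ν = σ ∘ τ_l`; hence the second identity reduces to the first.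
-/

section ExtPerm

variable {k : ℕ} (σ : Equiv.Perm (Fin k))

@[simp]
theorem extPerm_castSucc (s : Fin k) : extPerm σ s.castSucc = (σ s).castSucc := by
  simp [extPerm]

@[simp]
theorem extPerm_last : extPerm σ (Fin.last k) = Fin.last k := by
  simp [extPerm]

theorem forall_snoc_eq_snoc_extPerm_iff {α : Type*} (i j : Fin k → α) (a b : α) :
    (∀ s, (Fin.snoc i a : Fin (k + 1) → α) s =
        (Fin.snoc j b : Fin (k + 1) → α) (extPerm σ s)) ↔
      (∀ s, i s = j (σ s)) ∧ a = b := by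
  simp only [Fin.forall_fin_succ', extPerm_castSucc, extPerm_last, Fin.snoc_castSucc,
    Fin.snoc_last]

end ExtPerm

section DiagPerm

variable {k n : ℕ}

theorem diagPerm_extPerm_snoc (σ : Equiv.Perm (Fin k)) (T : Tensor (k + 1) n)
    (i j : Fin k → Fin n) (a b : Fin n) :
    diagPerm (extPerm σ) T (Fin.snoc i a) (Fin.snoc j b) =
      if a = b then diagPerm σ (fun p => T (Fin.snoc p a)) i j else 0 := by
  simp only [diagPerm, forall_snoc_eq_snoc_extPerm_iff, and_comm, ite_and]

theorem diagPerm_contract (σ : Equiv.Perm (Fin k)) (T : Tensor (k + 1) n) (x : Fin n → ℝ)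
    (i j : Fin k → Fin n) :
    diagPerm σ (contract T x) i j =
      ∑ a, diagPerm σ (fun p => T (Fin.snoc p a)) i j * x a := by
  by_cases hij : ∀ s, i s = j (σ s) <;> simp [diagPerm, contract, hij]

theorem lastApply_diagPerm_extPerm (σ : Equiv.Perm (Fin k)) (T : Tensor (k + 1) n)
    (H : Matrix (Fin n) (Fin n) ℝ) :
    lastApply (diagPerm (extPerm σ) T) H = diagPerm σ (contract T H.diag) := by
  ext i j
  calc lastApply (diagPerm (extPerm σ) T) H i j
    _ = ∑ a, ∑ b,
          (if a = b then diagPerm σ (fun p => T (Fin.snoc p a)) i j else 0) * H a b := by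
      simp only [lastApply, diagPerm_extPerm_snoc]
    _ = ∑ a, diagPerm σ (fun p => T (Fin.snoc p a)) i j * H.diag a := by
      simp only [ite_mul, zero_mul, Finset.sum_ite_eq, Finset.mem_univ, if_true,
        Matrix.diag_apply]
    _ = diagPerm σ (contract T H.diag) i j := (diagPerm_contract σ T H.diag i j).symm

theorem diagPerm_mul_of_comp_eq_self (σ τ : Equiv.Perm (Fin k)) {T : Tensor k n}
    (hT : ∀ i, T i ≠ 0 → i ∘ τ = i) : diagPerm (σ * τ) T = diagPerm σ T := by
  ext i j
  by_cases hi : T i = 0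
  · simp only [diagPerm, hi, ite_self]
  · have hiτ : ∀ s, i (τ s) = i s := congrFun (hT i hi)
    have index_iff : (∀ s, i s = j ((σ * τ) s)) ↔ ∀ s, i s = j (σ s) :=
      calc (∀ s, i s = j ((σ * τ) s))
        _ ↔ ∀ s, i (τ s) = j (σ (τ s)) := by simp only [hiτ, Equiv.Perm.mul_apply]
        _ ↔ ∀ s, i s = j (σ s) := τ.forall_congr_right (q := fun s => i s = j (σ s))
    simp only [diagPerm, index_iff]

theorem comp_swap_eq_self_of_liftTau_ne_zero {T : Tensor k n} {l : Fin k}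
    {i : Fin (k + 1) → Fin n} (hi : liftTau T l i ≠ 0) :
    i ∘ Equiv.swap l.castSucc (Fin.last k) = i := by
  have hl : i l.castSucc = i (Fin.last k) := of_not_not fun hne => hi (if_neg hne)
  exact funext fun _ => Equiv.apply_swap_eq_self hl _

theorem diagPerm_permIns_liftTau (σ : Equiv.Perm (Fin k)) (T : Tensor k n) (l : Fin k) :
    diagPerm (permIns σ l.castSucc) (liftTau T l) = diagPerm (extPerm σ) (liftTau T l) :=
  diagPerm_mul_of_comp_eq_self _ _ fun _ => comp_swap_eq_self_of_liftTau_ne_zero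

end DiagPerm

/-- Corollary `jan11abc`. Let `σ` be a permutation of `{1,…,k}` and
`H` an arbitrary matrix. (1) For any `(k+1)`-tensor `T`:
`Diag^σ(T[diag H]) = (Diag^{σ_{(k+1)}} T)[H]`. (2) For any `k`-tensor `T` and every
`l ∈ {1,…,k}`: `Diag^σ(T^{τ_l}[diag H]) = (Diag^{σ_{(l)}} T^{τ_l})[H]`. -/
theorem statement15 {n k : ℕ} (σ : Equiv.Perm (Fin k))
    (H : Matrix (Fin n) (Fin n) ℝ) :
    (∀ T : Tensor (k+1) n,
        diagPerm σ (contract T (Matrix.diag H)) = lastApply (diagPerm (extPerm σ) T) H) ∧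
    (∀ (T : Tensor k n) (l : Fin k),
        diagPerm σ (contract (liftTau T l) (Matrix.diag H))
          = lastApply (diagPerm (permIns σ l.castSucc) (liftTau T l)) H) := by
  refine ⟨fun T => (lastApply_diagPerm_extPerm σ T H).symm, fun T l => ?_⟩
  rw [diagPerm_permIns_liftTau, lastApply_diagPerm_extPerm]

end
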